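/- arXiv:1708.08445 — 4 statements merged into one kernel-verified Lean document; each statement's English description precedes it below -/
import Mathlib

section
/- Let Λ be an n×n diagonal matrix with positive diagonal entries and M ∈ N_n^+, and let D̃_M be the diagonal matrix with (D̃_M)_{ii} = |(D_M)_{ii}|. (a) If G = M·Λ, then Ǧ = M′·Λ·P·D̃_M·P. (b) If G = Λ·M, then Ĝ = Λ·D̃_M·M″. -/
/-! Right multiplication by an upper triangular `U` multiplies a minor whose columns `T` receive
nothing from outside `T` by `∏_{i ∈ T} U i i` (`gminor_mul_right`); left multiplication behaves
dually (`gminor_mul_left`). This covers diagonal factors for every minor and unipotent factors for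
minors on the first columns, or on the last rows. Permuting rows and columns preserves
minors up to sign (`abs_gminor_submatrix`).

Taking minors of `P M P = M₁ P D M₂` on rows `I` and the first `k = |I|` columns therefore gives
`Δ_Ī(M) = ± Δ_I(M₁) ∏_{i ≤ k} D i i`, and on the last `k` rows and columns `J` it gives
`Δ^J̄(M) = ± ∏_{i ≤ k} D i i * Δ^J(M₂)`. All minors of totally positive matrices are nonnegative,
so the signs disappear once `D i i` is replaced by `|D i i|`. The factors `Λ` only contribute equal
products on both sides. Finally, a totally positive element of `N_n` times a positive diagonal
matrix is totally positive in `B_n`, because scaling columns to normalise the diagonal shows that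
a minor vanishing identically on `N_n` also vanishes identically on `B_n`. -/


open Matrix BigOperators

noncomputable section

/-- The dilogarithm function `Li₂`. -/
def dilog (x : ℝ) : ℝ := ∑' k : ℕ, x ^ (k + 1) / ((k : ℝ) + 1) ^ 2

/-- The Rogers dilogarithm `L(x) = Li₂(x) + (1/2) log x log (1-x)`. -/
def rogersL (x : ℝ) : ℝ := dilog x + (1 / 2) * Real.log x * Real.log (1 - x)

/-- `l(x) = (6/π²) L(x/(1+x))`. -/
def ell (x : ℝ) : ℝ := 6 / Real.pi ^ 2 * rogersL (x / (1 + x))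

/-- The minor of `M` on rows `I` and columns `J` (both taken in increasing order);
by convention it is `0` if the cardinalities disagree, and `1` for `I = J = ∅`. -/
def gminor {n : ℕ} (M : Matrix (Fin n) (Fin n) ℝ) (I J : Finset (Fin n)) : ℝ :=
  if h : J.card = I.card then
    Matrix.det (Matrix.of fun i j : Fin I.card =>
      M (I.orderEmbOfFin rfl i) (J.orderEmbOfFin h j))
  else 0

/-- The 1-based interval `[a,b]` regarded as a finset of `Fin n`. -/
def iv (n a b : ℕ) : Finset (Fin n) :=
  Finset.univ.filter fun i => a ≤ (i : ℕ) + 1 ∧ (i : ℕ) + 1 ≤ b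

/-- The last `k` columns (as a finset of `Fin n`). -/
def lastCols (n k : ℕ) : Finset (Fin n) := Finset.univ.filter fun j => n - k ≤ (j : ℕ)

/-- The first `k` rows (as a finset of `Fin n`). -/
def firstRows (n k : ℕ) : Finset (Fin n) := Finset.univ.filter fun i => (i : ℕ) < k

/-- The right flag minor `Δ_I`: rows `I`, last `|I|` columns. -/
def flagR {n : ℕ} (M : Matrix (Fin n) (Fin n) ℝ) (I : Finset (Fin n)) : ℝ :=
  gminor M I (lastCols n I.card)

/-- The upper flag minor `Δ^J`: first `|J|` rows, columns `J`. -/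
def flagU {n : ℕ} (M : Matrix (Fin n) (Fin n) ℝ) (J : Finset (Fin n)) : ℝ :=
  gminor M (firstRows n J.card) J

/-- `Ī = {n+1-a : a ∈ I}` (in 1-based labelling; `Fin.rev` in 0-based labelling). -/
def barSet {n : ℕ} (I : Finset (Fin n)) : Finset (Fin n) := I.image Fin.rev

/-- `B_n`: invertible upper triangular real matrices. -/
def Bset (n : ℕ) : Set (Matrix (Fin n) (Fin n) ℝ) :=
  {M | M.BlockTriangular id ∧ IsUnit M.det}

/-- `N_n`: unipotent upper triangular real matrices. -/
def Nset (n : ℕ) : Set (Matrix (Fin n) (Fin n) ℝ) :=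
  {M | M.BlockTriangular id ∧ ∀ i, M i i = 1}

/-- `M` is totally positive with respect to a class `S` of matrices: `M ∈ S` and every minor
that does not vanish identically on `S` is positive. -/
def totPos {n : ℕ} (S : Set (Matrix (Fin n) (Fin n) ℝ)) (M : Matrix (Fin n) (Fin n) ℝ) : Prop :=
  M ∈ S ∧ ∀ I J : Finset (Fin n), I.card = J.card →
    (∃ A ∈ S, gminor A I J ≠ 0) → 0 < gminor M I J

/-- `B_n^+`: totally positive matrices in `B_n`. -/
def Bpos (n : ℕ) (M : Matrix (Fin n) (Fin n) ℝ) : Prop := totPos (Bset n) M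

/-- `N_n^+`: totally positive matrices in `N_n`. -/
def Npos (n : ℕ) (M : Matrix (Fin n) (Fin n) ℝ) : Prop := totPos (Nset n) M

/-- The permutation matrix `P` with `P_{ij} = δ_{i+j,n+1}` (1-based). -/
def Pmat (n : ℕ) : Matrix (Fin n) (Fin n) ℝ :=
  Matrix.of fun i j => if (i : ℕ) + (j : ℕ) + 2 = n + 1 then 1 else 0

/-- `Decomp n M M₁ M₂ D` asserts `P M P = M₁ P D M₂` with `M₁, M₂ ∈ N_n^+` and `D` diagonal;
i.e. `M₁ = M′`, `M₂ = M″`, `D = D_M`. -/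
def Decomp (n : ℕ) (M M₁ M₂ D : Matrix (Fin n) (Fin n) ℝ) : Prop :=
  Npos n M₁ ∧ Npos n M₂ ∧ D.IsDiag ∧
    Pmat n * M * Pmat n = M₁ * Pmat n * D * M₂

/-- `J_k(x) = exp(x e_k) = 1 + x e_k` where `(e_k)_{ij} = δ_{ik} δ_{j,k+1}` (1-based). -/
def Jmat (n : ℕ) (k : ℕ) (x : ℝ) : Matrix (Fin n) (Fin n) ℝ :=
  1 + Matrix.of fun (i j : Fin n) => if (i : ℕ) + 1 = k ∧ (j : ℕ) = k then x else 0

/-- The matrix `𝕁_1 ⋯ 𝕁_{n-1}` with `𝕁_k = J_k(x_{1,k+1}) ⋯ J_1(x_{k,k+1})`,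
for a (1-based) coordinate function `x`. -/
def jacobiMat (n : ℕ) (x : ℕ → ℕ → ℝ) : Matrix (Fin n) (Fin n) ℝ :=
  (((List.range (n - 1)).map fun p =>
      (((List.range (p + 1)).map fun m => Jmat n (p + 1 - m) (x (m + 1) (p + 2))).prod)).prod)

/-- `x` is the collection of Jacobi coordinates of `M`: all `x i j` (for `1 ≤ i < j ≤ n`) are
positive and `M = 𝕁_1 ⋯ 𝕁_{n-1}`. -/
def IsJacobi (n : ℕ) (M : Matrix (Fin n) (Fin n) ℝ) (x : ℕ → ℕ → ℝ) : Prop :=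
  (∀ i j, 1 ≤ i → i < j → j ≤ n → 0 < x i j) ∧ M = jacobiMat n x

/-- The Y-variable `Y_{abc}(M)`. -/
def Yr (n : ℕ) (M : Matrix (Fin n) (Fin n) ℝ) (a b c : ℕ) : ℝ :=
  flagR M (iv n a (b-1) ∪ iv n (c+1) n) * flagR M (iv n (a+1) b ∪ iv n c n) /
    (flagR M (iv n a b ∪ iv n (c+1) n) * flagR M (iv n (a+1) (b-1) ∪ iv n c n))

/-- The Y-variable `Ỹ_{abc}(M)`. -/
def Ytr (n : ℕ) (M : Matrix (Fin n) (Fin n) ℝ) (a b c : ℕ) : ℝ :=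
  flagR M (iv n 1 a ∪ iv n (b+1) (c-1)) * flagR M (iv n 1 (a-1) ∪ iv n b c) /
    (flagR M (iv n 1 a ∪ iv n b (c-1)) * flagR M (iv n 1 (a-1) ∪ iv n (b+1) c))

/-- The Y-variable `Y^{abc}(M)`. -/
def Yu (n : ℕ) (M : Matrix (Fin n) (Fin n) ℝ) (a b c : ℕ) : ℝ :=
  flagU M (iv n a b ∪ iv n (c+1) n) * flagU M (iv n (a+1) (b-1) ∪ iv n c n) /
    (flagU M (iv n a (b-1) ∪ iv n (c+1) n) * flagU M (iv n (a+1) b ∪ iv n c n))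

/-- The Y-variable `Ỹ^{abc}(M)`. -/
def Ytu (n : ℕ) (M : Matrix (Fin n) (Fin n) ℝ) (a b c : ℕ) : ℝ :=
  flagU M (iv n 1 a ∪ iv n b (c-1)) * flagU M (iv n 1 (a-1) ∪ iv n (b+1) c) /
    (flagU M (iv n 1 a ∪ iv n (b+1) (c-1)) * flagU M (iv n 1 (a-1) ∪ iv n b c))

/-- The discrete tetrahedron `T_n = {(a,b,c) : 1 ≤ a < b < c ≤ n}`. -/
def Tset (n : ℕ) : Finset (ℕ × ℕ × ℕ) :=
  ((Finset.range (n+1)) ×ˢ (Finset.range (n+1)) ×ˢ (Finset.range (n+1))).filter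
    fun t => 1 ≤ t.1 ∧ t.1 < t.2.1 ∧ t.2.1 < t.2.2 ∧ t.2.2 ≤ n


/-! ### Minors of products with a triangular factor -/

/-- Reindexing a product over a finset by its increasing enumeration. -/
lemma prod_orderEmb {n k : ℕ} (J : Finset (Fin n)) (h : J.card = k) (d : Fin n → ℝ) :
    ∏ i, d (J.orderEmbOfFin h i) = ∏ j ∈ J, d j := by
  conv_rhs => rw [← Finset.image_orderEmbOfFin_univ J h]
  rw [Finset.prod_image fun a _ b _ hab => (J.orderEmbOfFin h).injective hab]

lemma sum_orderEmb {n k : ℕ} (J : Finset (Fin n)) (h : J.card = k) (d : Fin n → ℝ)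
    (hd : ∀ j ∉ J, d j = 0) :
    ∑ j, d j = ∑ i, d (J.orderEmbOfFin h i) := by
  rw [← Finset.sum_subset (Finset.subset_univ J) fun j _ hj => hd j hj]
  conv_lhs => rw [← Finset.image_orderEmbOfFin_univ J h]
  rw [Finset.sum_image fun a _ b _ hab => (J.orderEmbOfFin h).injective hab]

/-- The principal minor of an upper triangular matrix along an increasing enumeration. -/
lemma det_submatrix_upper {n k : ℕ} (U : Matrix (Fin n) (Fin n) ℝ) (hU : U.BlockTriangular id)
    (T : Finset (Fin n)) (h : T.card = k) :
    (U.submatrix (T.orderEmbOfFin h) (T.orderEmbOfFin h)).det = ∏ i ∈ T, U i i := by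
  rw [Matrix.det_of_isUpperTriangular, ← prod_orderEmb T h fun i => U i i]
  · rfl
  · intro i j hij
    exact hU ((T.orderEmbOfFin h).strictMono hij)

lemma gminor_mul_right {n : ℕ} (A U : Matrix (Fin n) (Fin n) ℝ) (hU : U.BlockTriangular id)
    (I T : Finset (Fin n)) (hT : ∀ i ∉ T, ∀ j ∈ T, U i j = 0) :
    gminor (A * U) I T = gminor A I T * ∏ i ∈ T, U i i := by
  unfold gminor
  split_ifs with h
  · rw [← det_submatrix_upper U hU T h, ← Matrix.det_mul]
    congr 1
    ext i j
    simp only [Matrix.of_apply, Matrix.mul_apply, Matrix.submatrix_apply]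
    refine sum_orderEmb T h _ fun x hx => ?_
    rw [hT x hx _ (Finset.orderEmbOfFin_mem T h j), mul_zero]
  · simp

lemma gminor_mul_left {n : ℕ} (L A : Matrix (Fin n) (Fin n) ℝ) (hL : L.BlockTriangular id)
    (S J : Finset (Fin n)) (hS : ∀ i ∈ S, ∀ j ∉ S, L i j = 0) :
    gminor (L * A) S J = (∏ i ∈ S, L i i) * gminor A S J := by
  unfold gminor
  split_ifs with h
  · rw [← det_submatrix_upper L hL S rfl, ← Matrix.det_mul]
    congr 1
    ext i j
    simp only [Matrix.of_apply, Matrix.mul_apply, Matrix.submatrix_apply]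
    refine sum_orderEmb S rfl _ fun x hx => ?_
    rw [hS _ (Finset.orderEmbOfFin_mem S rfl i) x hx, zero_mul]
  · simp

lemma gminor_mul_diagonal {n : ℕ} (A : Matrix (Fin n) (Fin n) ℝ) (d : Fin n → ℝ)
    (I J : Finset (Fin n)) :
    gminor (A * diagonal d) I J = gminor A I J * ∏ j ∈ J, d j := by
  rw [gminor_mul_right _ _ (Matrix.blockTriangular_diagonal d)]
  · simp
  · intro i hi j hj
    exact Matrix.diagonal_apply_ne _ fun h => hi (h ▸ hj)

lemma gminor_diagonal_mul {n : ℕ} (A : Matrix (Fin n) (Fin n) ℝ) (d : Fin n → ℝ)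
    (I J : Finset (Fin n)) :
    gminor (diagonal d * A) I J = (∏ i ∈ I, d i) * gminor A I J := by
  rw [gminor_mul_left _ _ (Matrix.blockTriangular_diagonal d)]
  · simp
  · intro i hi j hj
    exact Matrix.diagonal_apply_ne _ fun h => hj (h ▸ hi)

/-! ### Permuting rows and columns -/

/-- Two enumerations of the same finset differ by a permutation of the index type. -/
lemma exists_perm_orderEmb {n k : ℕ} (f : Fin k → Fin n) (hf : f.Injective) (I : Finset (Fin n))
    (h : I.card = k) (hI : ∀ i, f i ∈ I) :
    ∃ σ : Equiv.Perm (Fin k), ∀ i, f i = I.orderEmbOfFin h (σ i) := by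
  have hr : ∀ i, ∃ j, I.orderEmbOfFin h j = f i := fun i => by
    have := hI i
    rw [← Finset.mem_coe, ← Finset.range_orderEmbOfFin I h] at this
    exact this
  choose s hs using hr
  have hinj : s.Injective := fun a b hab => hf (by rw [← hs, ← hs, hab])
  exact ⟨Equiv.ofBijective s (Finite.injective_iff_bijective.mp hinj), fun i => (hs i).symm⟩

lemma abs_gminor_submatrix {n : ℕ} (A : Matrix (Fin n) (Fin n) ℝ) (a b : Fin n → Fin n)
    (ha : a.Injective) (hb : b.Injective) (I J : Finset (Fin n)) :
    |gminor (A.submatrix a b) I J| = |gminor A (I.image a) (J.image b)| := by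
  have hI := Finset.card_image_of_injective I ha
  have hJ := Finset.card_image_of_injective J hb
  unfold gminor
  by_cases h : J.card = I.card
  · rw [dif_pos h, dif_pos (by rw [hI, hJ, h])]
    obtain ⟨σ, hσ⟩ := exists_perm_orderEmb
      (fun i => a (I.orderEmbOfFin rfl (Fin.cast hI i)))
      (fun x y hxy => by simpa using ha hxy) (I.image a) rfl
      (fun i => Finset.mem_image_of_mem _ (Finset.orderEmbOfFin_mem _ _ _))
    obtain ⟨τ, hτ⟩ := exists_perm_orderEmb
      (fun i => b (J.orderEmbOfFin h (Fin.cast hI i)))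
      (fun x y hxy => by simpa using hb hxy) (J.image b) (by rw [hI, hJ, h])
      (fun i => Finset.mem_image_of_mem _ (Finset.orderEmbOfFin_mem _ _ _))
    rw [← Matrix.det_submatrix_equiv_self (finCongr hI)]
    conv_rhs => rw [← Matrix.abs_det_submatrix_equiv_equiv σ τ]
    congr 2
    ext i j
    simp only [Matrix.submatrix_apply, Matrix.of_apply, ← hσ, ← hτ]
    rfl
  · rw [dif_neg h, dif_neg (by rwa [hI, hJ])]

lemma mul_Pmat {n : ℕ} (A : Matrix (Fin n) (Fin n) ℝ) :
    A * Pmat n = A.submatrix id Fin.rev := by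
  ext i j
  have h : ∀ x : Fin n, ((x : ℕ) + (j : ℕ) + 2 = n + 1) ↔ x = j.rev := fun x => by
    rw [Fin.ext_iff, Fin.val_rev]; omega
  simp only [Matrix.mul_apply, Pmat, Matrix.of_apply, h]
  simp

lemma Pmat_mul {n : ℕ} (A : Matrix (Fin n) (Fin n) ℝ) :
    Pmat n * A = A.submatrix Fin.rev id := by
  ext i j
  have h : ∀ x : Fin n, ((i : ℕ) + (x : ℕ) + 2 = n + 1) ↔ x = i.rev := fun x => by
    rw [Fin.ext_iff, Fin.val_rev]; omega
  simp only [Matrix.mul_apply, Pmat, Matrix.of_apply, h]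
  simp

lemma barSet_firstRows (n k : ℕ) : barSet (firstRows n k) = lastCols n k := by
  ext j
  simp only [barSet, firstRows, lastCols, Finset.mem_image, Finset.mem_filter, Finset.mem_univ,
    true_and]
  constructor
  · rintro ⟨i, hi, rfl⟩
    rw [Fin.val_rev]; omega
  · intro h
    exact ⟨j.rev, by rw [Fin.val_rev]; omega, Fin.rev_rev j⟩

lemma barSet_barSet {n : ℕ} (I : Finset (Fin n)) : barSet (barSet I) = I := by
  simp [barSet, Finset.image_image, Function.comp_def]

lemma card_barSet {n : ℕ} (I : Finset (Fin n)) : (barSet I).card = I.card :=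
  Finset.card_image_of_injective I Fin.rev_injective

lemma prod_lastCols_rev (n k : ℕ) (d : Fin n → ℝ) :
    ∏ j ∈ lastCols n k, d j.rev = ∏ j ∈ firstRows n k, d j := by
  rw [← barSet_firstRows, barSet, Finset.prod_image fun a _ b _ hab => Fin.rev_injective hab]
  simp

/-! ### Total positivity -/

/-- Minors that vanish identically on `N_n` are zero at `M`, so no nonvanishing criterion is
needed here. -/
lemma Npos.gminor_nonneg {n : ℕ} {M : Matrix (Fin n) (Fin n) ℝ} (hM : Npos n M)
    (I J : Finset (Fin n)) : 0 ≤ gminor M I J := by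
  by_cases h : J.card = I.card
  · by_cases h0 : gminor M I J = 0
    · exact h0.ge
    · exact (hM.2 I J h.symm ⟨M, hM.1, h0⟩).le
  · rw [gminor, dif_neg h]

lemma Nset.det_eq_one {n : ℕ} {M : Matrix (Fin n) (Fin n) ℝ} (hM : M ∈ Nset n) : M.det = 1 := by
  rw [Matrix.det_of_isUpperTriangular hM.1]
  simp [hM.2]

/-- Scaling the columns of an element of `B_n` to make it unipotent multiplies each minor by a
nonzero number. -/
lemma exists_Nset_gminor_ne {n : ℕ} {I J : Finset (Fin n)}
    (h : ∃ A ∈ Bset n, gminor A I J ≠ 0) : ∃ A ∈ Nset n, gminor A I J ≠ 0 := by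
  obtain ⟨A, ⟨hA, hdet⟩, hne⟩ := h
  rw [Matrix.det_of_isUpperTriangular hA, isUnit_iff_ne_zero, Finset.prod_ne_zero_iff] at hdet
  refine ⟨A * diagonal fun i => (A i i)⁻¹,
    ⟨hA.mul (Matrix.blockTriangular_diagonal _), fun i => ?_⟩, ?_⟩
  · rw [Matrix.mul_diagonal, mul_inv_cancel₀ (hdet i (Finset.mem_univ i))]
  · rw [gminor_mul_diagonal]
    exact mul_ne_zero hne (Finset.prod_ne_zero_iff.mpr fun i _ =>
      inv_ne_zero (hdet i (Finset.mem_univ i)))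

lemma Npos.mul_diagonal {n : ℕ} {M : Matrix (Fin n) (Fin n) ℝ} (hM : Npos n M) (d : Fin n → ℝ)
    (hd : ∀ i, 0 < d i) : Bpos n (M * diagonal d) := by
  refine ⟨⟨hM.1.1.mul (Matrix.blockTriangular_diagonal _), ?_⟩, fun I J hc h => ?_⟩
  · rw [Matrix.det_mul, Nset.det_eq_one hM.1, Matrix.det_diagonal, one_mul]
    exact (Finset.prod_pos fun i _ => hd i).ne'.isUnit
  · rw [gminor_mul_diagonal]
    exact mul_pos (hM.2 I J hc (exists_Nset_gminor_ne h)) (Finset.prod_pos fun i _ => hd i)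

lemma Npos.diagonal_mul {n : ℕ} {M : Matrix (Fin n) (Fin n) ℝ} (hM : Npos n M) (d : Fin n → ℝ)
    (hd : ∀ i, 0 < d i) : Bpos n (diagonal d * M) := by
  refine ⟨⟨(Matrix.blockTriangular_diagonal _).mul hM.1.1, ?_⟩, fun I J hc h => ?_⟩
  · rw [Matrix.det_mul, Nset.det_eq_one hM.1, Matrix.det_diagonal, mul_one]
    exact (Finset.prod_pos fun i _ => hd i).ne'.isUnit
  · rw [gminor_diagonal_mul]
    exact mul_pos (Finset.prod_pos fun i _ => hd i) (hM.2 I J hc (exists_Nset_gminor_ne h))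

/-! ### Minors of the factorization -/

/-- Minors of `P M P = M₁ P D M₂` on the first `k` columns. -/
lemma abs_gminor_first {n k : ℕ} {M M₁ M₂ : Matrix (Fin n) (Fin n) ℝ} {d : Fin n → ℝ}
    (h₂ : M₂ ∈ Nset n)
    (h : Pmat n * M * Pmat n = M₁ * Pmat n * diagonal d * M₂) (I : Finset (Fin n)) :
    |gminor M (barSet I) (lastCols n k)| =
      |gminor M₁ I (lastCols n k)| * ∏ i ∈ firstRows n k, |d i| := by
  have hz : ∀ i ∉ firstRows n k, ∀ j ∈ firstRows n k, M₂ i j = 0 := fun i hi j hj => by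
    simp only [firstRows, Finset.mem_filter, Finset.mem_univ, true_and] at hi hj
    exact h₂.1 (show j < i from Fin.lt_def.mpr (by omega))
  have key := congrArg (fun X => |gminor X I (firstRows n k)|) h
  simp only [Pmat_mul, mul_Pmat, Matrix.submatrix_submatrix, Function.id_comp,
    Function.comp_id] at key
  rw [gminor_mul_right _ _ h₂.1 _ _ hz, gminor_mul_diagonal, abs_mul, abs_mul,
    abs_gminor_submatrix _ _ _ Fin.rev_injective Fin.rev_injective,
    abs_gminor_submatrix _ _ _ Function.injective_id Fin.rev_injective] at key
  change |gminor M (barSet I) (barSet _)| = |gminor M₁ _ (barSet _)| * _ * _ at key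
  simpa [barSet_firstRows, h₂.2, Finset.abs_prod] using key

/-- Minors of `P M P = M₁ P D M₂` on the last `k` rows. -/
lemma abs_gminor_last {n k : ℕ} {M M₁ M₂ : Matrix (Fin n) (Fin n) ℝ} {d : Fin n → ℝ}
    (h₁ : M₁ ∈ Nset n)
    (h : Pmat n * M * Pmat n = M₁ * Pmat n * diagonal d * M₂) (J : Finset (Fin n)) :
    |gminor M (firstRows n k) (barSet J)| =
      (∏ i ∈ firstRows n k, |d i|) * |gminor M₂ (firstRows n k) J| := by
  have hz : ∀ i ∈ lastCols n k, ∀ j ∉ lastCols n k, M₁ i j = 0 := fun i hi j hj => by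
    simp only [lastCols, Finset.mem_filter, Finset.mem_univ, true_and] at hi hj
    exact h₁.1 (show j < i from Fin.lt_def.mpr (by omega))
  have hb : barSet (lastCols n k) = firstRows n k := by
    rw [← barSet_firstRows, barSet_barSet]
  rw [Matrix.mul_assoc (M₁ * _), Matrix.mul_assoc M₁] at h
  have key := congrArg (fun X => |gminor X (lastCols n k) J|) h
  simp only [Pmat_mul, mul_Pmat, Matrix.submatrix_submatrix, Function.id_comp,
    Function.comp_id] at key
  rw [gminor_mul_left _ _ h₁.1 _ _ hz, abs_mul,
    abs_gminor_submatrix _ _ _ Fin.rev_injective Fin.rev_injective,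
    abs_gminor_submatrix _ _ _ Fin.rev_injective Function.injective_id,
    gminor_diagonal_mul, abs_mul] at key
  change |gminor M (barSet _) (barSet J)| =
    _ * (|∏ i ∈ barSet _, d i| * |gminor M₂ (barSet _) _|) at key
  simpa [hb, h₁.2, Finset.abs_prod] using key

lemma det_Pmat_sq (n : ℕ) : (Pmat n).det * (Pmat n).det = 1 := by
  rw [← Matrix.det_mul, mul_Pmat]
  have : (Pmat n).submatrix id Fin.rev = 1 := by
    ext i j
    simp only [Pmat, Matrix.submatrix_apply, Matrix.of_apply, Matrix.one_apply, id, Fin.val_rev,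
      Fin.ext_iff]
    congr 1
    exact propext (by omega)
  rw [this, Matrix.det_one]

lemma diag_ne_zero {n : ℕ} {M M₁ M₂ : Matrix (Fin n) (Fin n) ℝ} {d : Fin n → ℝ}
    (hM : M ∈ Nset n) (h : Pmat n * M * Pmat n = M₁ * Pmat n * diagonal d * M₂) (i : Fin n) :
    d i ≠ 0 := by
  have key := congrArg Matrix.det h
  simp only [Matrix.det_mul, Matrix.det_diagonal, Nset.det_eq_one hM, mul_one, det_Pmat_sq] at key
  have hp : ∏ i, d i ≠ 0 := fun h0 => by simp [h0] at key
  exact Finset.prod_ne_zero_iff.mp hp i (Finset.mem_univ i)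

/-- Lemma 3 (Lemma `GMB`): with `G = MΛ` one has `Ǧ = M′ Λ P D̃_M P`, and with `G = ΛM`
one has `Ĝ = Λ D̃_M M″`, where `D̃_M` has entries `|（D_M)_{ii}|`.  The matrices `Ǧ, Ĝ`
are expressed through their defining property (positivity and the flag-minor relations). -/
theorem stmt_5 (n : ℕ) (hn : 2 ≤ n) (Λ M M₁ M₂ D Dt : Matrix (Fin n) (Fin n) ℝ)
    (hΛd : Λ.IsDiag) (hΛpos : ∀ i, 0 < Λ i i) (hM : Npos n M)
    (hdec : Decomp n M M₁ M₂ D)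
    (hDt : Dt = Matrix.of fun (i j : Fin n) => |D i j|) :
    (Bpos n (M₁ * Λ * Pmat n * Dt * Pmat n) ∧
        ∀ I : Finset (Fin n),
          flagR (M₁ * Λ * Pmat n * Dt * Pmat n) I = flagR (M * Λ) (barSet I)) ∧
    (Bpos n (Λ * Dt * M₂) ∧
        ∀ J : Finset (Fin n), flagU (Λ * Dt * M₂) J = flagU (Λ * M) (barSet J)) := by
  obtain ⟨h₁, h₂, hD, h⟩ := hdec
  obtain ⟨l, rfl⟩ : ∃ l, Λ = diagonal l := ⟨_, hΛd.diagonal_diag.symm⟩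
  obtain ⟨d, rfl⟩ : ∃ d, D = diagonal d := ⟨_, hD.diagonal_diag.symm⟩
  have hDt' : Dt = diagonal fun i => |d i| := by
    rw [hDt]
    ext i j
    by_cases hij : i = j
    · subst hij; simp
    · simp [hij]
  subst hDt'
  have hl : ∀ i, 0 < l i := fun i => by simpa using hΛpos i
  -- Taking determinants in the factorization shows that no `d i` vanishes.
  have hd : ∀ i, 0 < |d i| := fun i => abs_pos.mpr (diag_ne_zero hM.1 h i)
  -- Conjugating by `P` reverses the diagonal, which matches the last columns with the first.
  have hPDP : M₁ * diagonal l * Pmat n * diagonal (fun i => |d i|) * Pmat n =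
      M₁ * diagonal fun i => l i * |d i.rev| := by
    rw [Matrix.mul_assoc (M₁ * _), Matrix.mul_assoc (M₁ * _), Matrix.mul_assoc M₁, mul_Pmat,
      Pmat_mul, Matrix.submatrix_submatrix, Function.id_comp, Function.comp_id,
      Matrix.submatrix_diagonal _ _ Fin.rev_injective, Matrix.diagonal_mul_diagonal]
    rfl
  rw [hPDP, Matrix.diagonal_mul_diagonal]
  refine ⟨⟨h₁.mul_diagonal _ fun i => mul_pos (hl i) (hd _), fun I => ?_⟩,
    h₂.diagonal_mul _ fun i => mul_pos (hl i) (hd i), fun J => ?_⟩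
  · have key := abs_gminor_first (k := I.card) h₂.1 h I
    rw [abs_of_nonneg (hM.gminor_nonneg _ _), abs_of_nonneg (h₁.gminor_nonneg _ _)] at key
    rw [flagR, flagR, card_barSet, gminor_mul_diagonal, gminor_mul_diagonal, key,
      Finset.prod_mul_distrib, prod_lastCols_rev n I.card fun i => |d i|]
    ring
  · have key := abs_gminor_last (k := J.card) h₁.1 h J
    rw [abs_of_nonneg (hM.gminor_nonneg _ _), abs_of_nonneg (h₂.gminor_nonneg _ _)] at key
    rw [flagU, flagU, card_barSet, gminor_diagonal_mul, gminor_diagonal_mul, key,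
      Finset.prod_mul_distrib]
    ring

end
end

section
/- The mappings M ↦ M′ and M ↦ M″ on N_n^+ are involutions: for every M ∈ N_n^+, (M′)′ = M and (M″)″ = M. -/
/-!
Uniqueness of the factorization does all the work, and only unipotence is needed for it, not
positivity. Write `P = Pmat n`, so that `P * P = 1` and conjugation by `P` reverses rows and
columns. Eliminating `M₁` (resp. `M₂`) from the two given factorizations shows that
`P * (N₁⁻¹ * M) * P` (resp. `P * (M * K₂⁻¹) * P`) is a product of upper triangular matrices.
A matrix that is upper triangular and stays so after conjugation by `P` is diagonal. As `M`, `N₁`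
and `K₂` have unit diagonal, the diagonal matrix in question is the identity.
-/

open Matrix BigOperators

noncomputable section

theorem Pmat_apply (n : ℕ) (i j : Fin n) : Pmat n i j = if j = Fin.rev i then 1 else 0 := by
  simp only [Pmat, Matrix.of_apply, Fin.ext_iff, Fin.val_rev]
  congr 1
  apply propext
  omega

theorem Pmat_conj_apply (n : ℕ) (X : Matrix (Fin n) (Fin n) ℝ) (i j : Fin n) :
    (Pmat n * X * Pmat n) i j = X (Fin.rev i) (Fin.rev j) := by
  have h (k : Fin n) : j = Fin.rev k ↔ k = Fin.rev j := Fin.rev_eq_iff.symm.trans eq_comm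
  simp [Matrix.mul_apply, Pmat_apply, h]

theorem Pmat_mul_self (n : ℕ) : Pmat n * Pmat n = 1 := by
  ext i j
  have h := Pmat_conj_apply n 1 i j
  rw [Matrix.mul_one] at h
  rw [h]
  simp [Matrix.one_apply]

theorem upper_of_isDiag {n : ℕ} {D : Matrix (Fin n) (Fin n) ℝ} (h : D.IsDiag) :
    D.BlockTriangular id := fun _ _ hij => h (ne_of_gt hij)

theorem isDiag_conj {n : ℕ} {D : Matrix (Fin n) (Fin n) ℝ} (h : D.IsDiag) :
    (Pmat n * D * Pmat n).IsDiag := fun i j hij => by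
  refine (Pmat_conj_apply n D i j).trans ?_
  exact h (fun e => hij (Fin.rev_injective e))

theorem isDiag_of_upper_of_conj_upper {n : ℕ} {X : Matrix (Fin n) (Fin n) ℝ}
    (hX : X.BlockTriangular id) (hY : (Pmat n * X * Pmat n).BlockTriangular id) : X.IsDiag := by
  intro i j hij
  rcases lt_or_gt_of_ne hij with h | h
  · have := hY (show id (Fin.rev j) < id (Fin.rev i) from Fin.rev_lt_rev.mpr h)
    rwa [Pmat_conj_apply, Fin.rev_rev, Fin.rev_rev] at this
  · exact hX h

theorem isUnit_det_of_mem_Nset {n : ℕ} {N : Matrix (Fin n) (Fin n) ℝ} (hN : N ∈ Nset n) :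
    IsUnit N.det := by
  rw [Matrix.det_of_isUpperTriangular hN.1]
  simp [hN.2]

theorem inv_upper {n : ℕ} {N : Matrix (Fin n) (Fin n) ℝ} (hN : N ∈ Nset n) :
    N⁻¹.BlockTriangular id := by
  have := Matrix.invertibleOfIsUnitDet N (isUnit_det_of_mem_Nset hN)
  exact Matrix.blockTriangular_inv_of_blockTriangular hN.1

/-- Uniqueness of the left unipotent factor: `M` and `N` agree if `N⁻¹ * M` stays upper triangular
after conjugation by `Pmat n`. -/
theorem eq_of_conj_inv_mul_upper {n : ℕ} {M N : Matrix (Fin n) (Fin n) ℝ}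
    (hM : M ∈ Nset n) (hN : N ∈ Nset n)
    (h : (Pmat n * (N⁻¹ * M) * Pmat n).BlockTriangular id) : N = M := by
  have hd := isDiag_of_upper_of_conj_upper ((inv_upper hN).mul hM.1) h
  have e : N * (N⁻¹ * M) = M :=
    Matrix.mul_nonsing_inv_cancel_left _ _ (isUnit_det_of_mem_Nset hN)
  rw [← hd.diagonal_diag] at e
  have hone : Matrix.diag (N⁻¹ * M) = 1 := by
    funext i
    have := congrFun (congrFun e i) i
    rwa [Matrix.mul_diagonal, hN.2, hM.2, one_mul] at this
  rw [hone] at e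
  simpa using e

/-- Uniqueness of the right unipotent factor: `M` and `N` agree if `M * N⁻¹` stays upper triangular
after conjugation by `Pmat n`. -/
theorem eq_of_conj_mul_inv_upper {n : ℕ} {M N : Matrix (Fin n) (Fin n) ℝ}
    (hM : M ∈ Nset n) (hN : N ∈ Nset n)
    (h : (Pmat n * (M * N⁻¹) * Pmat n).BlockTriangular id) : N = M := by
  have hd := isDiag_of_upper_of_conj_upper (hM.1.mul (inv_upper hN)) h
  have e : M * N⁻¹ * N = M :=
    Matrix.nonsing_inv_mul_cancel_right _ _ (isUnit_det_of_mem_Nset hN)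
  rw [← hd.diagonal_diag] at e
  have hone : Matrix.diag (M * N⁻¹) = 1 := by
    funext i
    have := congrFun (congrFun e i) i
    rwa [Matrix.diagonal_mul, hN.2, hM.2, mul_one] at this
  rw [hone] at e
  simpa using e

/-- The maps `M ↦ M′` and `M ↦ M″` are involutions on `N_n^+`:
`(M′)′ = M` and `(M″)″ = M`. -/
theorem stmt_6 (n : ℕ) (hn : 2 ≤ n) (M M₁ M₂ D N₁ N₂ E K₁ K₂ F : Matrix (Fin n) (Fin n) ℝ)
    (hM : Npos n M) (h1 : Decomp n M M₁ M₂ D)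
    (h2 : Decomp n M₁ N₁ N₂ E) (h3 : Decomp n M₂ K₁ K₂ F) :
    N₁ = M ∧ K₂ = M := by
  obtain ⟨hM₁, hM₂, hD, e1⟩ := h1
  obtain ⟨hN₁, hN₂, hE, e2⟩ := h2
  obtain ⟨hK₁, hK₂, hF, e3⟩ := h3
  have hP := Pmat_mul_self n
  have hPP (X : Matrix (Fin n) (Fin n) ℝ) : Pmat n * (Pmat n * X) = X := by
    rw [← Matrix.mul_assoc, hP, Matrix.one_mul]
  constructor
  · apply eq_of_conj_inv_mul_upper hM.1 hN₁.1
    have e : M * Pmat n = N₁ * (Pmat n * (E * N₂ * D * M₂)) := by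
      calc M * Pmat n = Pmat n * (Pmat n * M * Pmat n) := by
            simp only [Matrix.mul_assoc, hPP]
        _ = Pmat n * M₁ * Pmat n * (D * M₂) := by
            rw [e1]; simp only [Matrix.mul_assoc]
        _ = _ := by rw [e2]; simp only [Matrix.mul_assoc]
    have e' : Pmat n * (N₁⁻¹ * M) * Pmat n = E * N₂ * D * M₂ := by
      rw [Matrix.mul_assoc, Matrix.mul_assoc, e,
        Matrix.nonsing_inv_mul_cancel_left _ _ (isUnit_det_of_mem_Nset hN₁.1), hPP]
    rw [e']
    exact (((upper_of_isDiag hE).mul hN₂.1.1).mul (upper_of_isDiag hD)).mul hM₂.1.1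
  · apply eq_of_conj_mul_inv_upper hM.1 hK₂.1
    have e : Pmat n * M =
        M₁ * (Pmat n * D * Pmat n) * K₁ * (Pmat n * F * Pmat n) * Pmat n * K₂ := by
      calc Pmat n * M = Pmat n * M * Pmat n * Pmat n := by
            simp only [Matrix.mul_assoc, hP, Matrix.mul_one]
        _ = M₁ * (Pmat n * D * Pmat n) * (Pmat n * M₂ * Pmat n) := by
            rw [e1]; simp only [Matrix.mul_assoc, hPP]
        _ = _ := by rw [e3]; simp only [Matrix.mul_assoc, hPP]
    have e' : Pmat n * (M * K₂⁻¹) * Pmat n =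
        M₁ * (Pmat n * D * Pmat n) * K₁ * (Pmat n * F * Pmat n) := by
      rw [← Matrix.mul_assoc, e,
        Matrix.mul_nonsing_inv_cancel_right _ _ (isUnit_det_of_mem_Nset hK₂.1),
        Matrix.mul_assoc, hP, Matrix.mul_one]
    rw [e']
    exact ((hM₁.1.1.mul (upper_of_isDiag (isDiag_conj hD))).mul hK₁.1.1).mul
      (upper_of_isDiag (isDiag_conj hF))

end
end

section
/- For every M ∈ N_3^+ regarded as a matrix function of its Jacobi coordinates x_{12}, x_{13}, x_{23}, one has M̄′ = L_{123}(M) and M̄″ = R_{123}(M), where M̄ denotes the matrix in N_3^+ whose Jacobi coordinates are the reciprocals of those of M. -/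
/-! In Jacobi coordinates `a = x₁₂`, `b = x₁₃`, `c = x₂₃`, a matrix of `N_3^+` is
`J₁(a) J₂(b) J₁(c)`, whose entries above the diagonal are `a + c`, `a b`, `b`
(`jacobiMat_three`). Since conjugation by `P` reverses rows and columns, `P M̄ P = M̄′ P D M̄″` is
a system of nine polynomial equations in the entries of the three factors on the right. Reading it
from the bottom-left corner determines the entries of `D`, `M̄′` and `M̄″` one after the other, and
they agree with the entries of `jacobiMat 3` at `L_{123}(x)` and `R_{123}(x)`. Each
step can be solved because the pivots `D₁₁ = 1/(ab)` and `D₂₂ = -a/c` are nonzero. -/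

open Matrix BigOperators

noncomputable section

/-- The change of Jacobi coordinates `L_{abc}` of (3.6). -/
def Lmap (a b c : ℕ) (x : ℕ → ℕ → ℝ) : ℕ → ℕ → ℝ := fun i j =>
  if i = a ∧ j = b then x a c
  else if i = a ∧ j = c then x a b
  else if i = b ∧ j = c then x a c * x b c / x a b
  else x i j

/-- The change of Jacobi coordinates `R_{abc}` of (3.7). -/
def Rmap (a b c : ℕ) (x : ℕ → ℕ → ℝ) : ℕ → ℕ → ℝ := fun i j =>
  if i = a ∧ j = b then x a b * x a c / x b c
  else if i = a ∧ j = c then x b c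
  else if i = b ∧ j = c then x a c
  else x i j

theorem jacobiMat_three (x : ℕ → ℕ → ℝ) :
    jacobiMat 3 x = !![1, x 1 2 + x 2 3, x 1 2 * x 1 3; 0, 1, x 1 3; 0, 0, 1] := by
  ext i j
  fin_cases i <;> fin_cases j <;>
    simp [jacobiMat, Jmat, List.range_succ, Matrix.mul_apply, Fin.sum_univ_three,
      Matrix.one_apply]
  ring

theorem eq_of_mem_Nset_three {A : Matrix (Fin 3) (Fin 3) ℝ} (hA : A ∈ Nset 3) :
    A = !![1, A 0 1, A 0 2; 0, 1, A 1 2; 0, 0, 1] := by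
  obtain ⟨ht, hd⟩ := hA
  have h10 : A 1 0 = 0 := ht (by decide)
  have h20 : A 2 0 = 0 := ht (by decide)
  have h21 : A 2 1 = 0 := ht (by decide)
  ext i j
  fin_cases i <;> fin_cases j <;> simp [hd, h10, h20, h21]

/-- The equation `P B P = A P D C` for `B`, `A`, `C` unipotent upper triangular of size `3` and `D`
diagonal, written out at every entry except `13`; `u, v, w`, `p, q, r` and `s, t, z` are the entries above the
diagonal (in the order `12, 13, 23`) of `B`, `A` and `C`. -/
theorem decomp_entries {u v w p q r s t z : ℝ} {D : Matrix (Fin 3) (Fin 3) ℝ} (hD : D.IsDiag)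
    (h : Pmat 3 * !![1, u, v; 0, 1, w; 0, 0, 1] * Pmat 3 =
      !![1, p, q; 0, 1, r; 0, 0, 1] * Pmat 3 * D * !![1, s, t; 0, 1, z; 0, 0, 1]) :
    D 0 0 = v ∧ D 0 0 * s = u ∧ D 0 0 * t = 1 ∧
    r * D 0 0 = w ∧ r * D 0 0 * s + D 1 1 = 1 ∧ r * D 0 0 * t + D 1 1 * z = 0 ∧
    q * D 0 0 = 1 ∧ q * D 0 0 * s + p * D 1 1 = 0 := by
  have h01 : D 0 1 = 0 := hD (by decide)
  have h02 : D 0 2 = 0 := hD (by decide)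
  have h10 : D 1 0 = 0 := hD (by decide)
  have h12 : D 1 2 = 0 := hD (by decide)
  have h20 : D 2 0 = 0 := hD (by decide)
  have h21 : D 2 1 = 0 := hD (by decide)
  have hP : Pmat 3 = !![0, 0, 1; 0, 1, 0; 1, 0, 0] := by
    ext i j
    fin_cases i <;> fin_cases j <;> simp [Pmat]
  rw [hP] at h
  have e (i j : Fin 3) := congrFun (congrFun h i) j
  have e20 := e 2 0
  have e21 := e 2 1
  have e22 := e 2 2
  have e10 := e 1 0
  have e11 := e 1 1
  have e12 := e 1 2
  have e00 := e 0 0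
  have e01 := e 0 1
  simp [Matrix.mul_apply, Fin.sum_univ_three, h01, h02, h10, h12, h20, h21, -Matrix.cons_mul]
    at e20 e21 e22 e10 e11 e12 e00 e01
  refine ⟨?_, ?_, ?_, ?_, ?_, ?_, ?_, ?_⟩ <;> linarith

/-- For `M ∈ N_3^+` with Jacobi coordinates `x`, one has `M̄′ = L_{123}(M)` and
`M̄″ = R_{123}(M)`, where `M̄` has the reciprocal Jacobi coordinates. -/
theorem stmt_8 (M : Matrix (Fin 3) (Fin 3) ℝ) (x : ℕ → ℕ → ℝ) (hx : IsJacobi 3 M x)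
    (Mb M₁ M₂ D : Matrix (Fin 3) (Fin 3) ℝ)
    (hMb : Mb = jacobiMat 3 fun i j => (x i j)⁻¹)
    (hdec : Decomp 3 Mb M₁ M₂ D) :
    M₁ = jacobiMat 3 (Lmap 1 2 3 x) ∧ M₂ = jacobiMat 3 (Rmap 1 2 3 x) := by
  obtain ⟨hpos, -⟩ := hx
  have ha : 0 < x 1 2 := hpos 1 2 (by norm_num) (by norm_num) (by norm_num)
  have hb : 0 < x 1 3 := hpos 1 3 (by norm_num) (by norm_num) (by norm_num)
  have hc : 0 < x 2 3 := hpos 2 3 (by norm_num) (by norm_num) (by norm_num)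
  obtain ⟨⟨hN₁, -⟩, ⟨hN₂, -⟩, hD, h⟩ := hdec
  have hM₁ := eq_of_mem_Nset_three hN₁
  have hM₂ := eq_of_mem_Nset_three hN₂
  rw [hMb, jacobiMat_three, hM₁, hM₂] at h
  obtain ⟨e20, e21, e22, e10, e11, e12, e00, e01⟩ := decomp_entries hD h
  rw [jacobiMat_three, jacobiMat_three, hM₁, hM₂]
  simp only [Lmap, Rmap]
  generalize x 1 2 = a at *
  generalize x 1 3 = b at *
  generalize x 2 3 = c at *
  rw [e20] at e21 e22 e10 e11 e12 e00 e01
  have hr : M₁ 1 2 = a := by field_simp at e10; linarith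
  have hq : M₁ 0 2 = a * b := by field_simp at e00; linarith
  have ht : M₂ 0 2 = a * b := by field_simp at e22; linarith
  have hs : M₂ 0 1 = b * (a + c) / c := by field_simp at e21 ⊢; linarith
  have hd : D 1 1 = -a / c := by
    rw [hr, hs] at e11; field_simp at e11 ⊢; linarith
  have hz : M₂ 1 2 = c := by
    rw [hr, ht, hd] at e12; field_simp at e12
    simp only [mul_zero, mul_eq_zero, ha.ne', false_or] at e12
    linarith
  have hp : M₁ 0 1 = b * (a + c) / a := by
    rw [hq, hs, hd] at e01; field_simp at e01 ⊢; linarith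
  rw [hr, hq, ht, hs, hz, hp]
  constructor
  · ext i j
    fin_cases i <;> fin_cases j <;> simp <;> field_simp
  · ext i j
    fin_cases i <;> fin_cases j <;> simp <;> field_simp

end
end

section
/- Let x > 0 and let M_x ∈ N_n^+ be the matrix all of whose Jacobi coordinates equal x. Then for all 1 ≤ a < b < c ≤ n, the Y-variables of M_x do not depend on x and are given by Y_{abc}(M_x) = Ỹ_{abc}(M_x) = (c−b)/(b−a) and Y^{abc}(M_x) = Ỹ^{abc}(M_x) = (b−a)/(c−b). -/
/-!
The matrix `M_x` with all Jacobi coordinates equal to `x` is a binomial matrix. Consecutive factors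
in `𝕁_k = J_k(x) ⋯ J_1(x)` satisfy `e_{i+1} e_i = 0`, so `𝕁_k = 1 + x (e_1 + ⋯ + e_k)`, and Pascal's
rule gives `(M_x)_{ij} = x^{j-i} C(n-i, j-i)` (1-based).

Up to row and column rescalings, each flag minor of this matrix is therefore the determinant of a
matrix of falling factorials, i.e. a Vandermonde determinant: both `Δ_I` and `Δ^I` have the form
`C_{|I|} ∏_{i ∈ I} g_i ∏_{i < j in I} (j - i)` with nonzero constants `C_k`, `g_i`
(`IsVandermondeLike`, `flagR_vand`, `flagU_vand`).

For each Y-variable there is a set `K` not containing `a, b, c` such that the four minors are those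
of `K ∪ {a}`, `K ∪ {b, c}`, `K ∪ {a, b}`, `K ∪ {c}`. In the cross-ratio, the factors `C_k`, `g_i`
and the differences involving `K` cancel, leaving `(c - b) / (b - a)` (`IsVandermondeLike.ratio`).
-/


open Matrix BigOperators

noncomputable section

/-! ### The binomial form of the matrix -/

/-- The matrix `x (e_1 + ⋯ + e_q)`. -/
def superdiag (n q : ℕ) (x : ℝ) : Matrix (Fin n) (Fin n) ℝ :=
  Matrix.of fun i j => if (i : ℕ) + 1 = j ∧ (i : ℕ) < q then x else 0

lemma Jmat_mul_superdiag (n q : ℕ) (x : ℝ) :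
    Jmat n (q + 1) x * (1 + superdiag n q x) = 1 + superdiag n (q + 1) x := by
  have h0 : (Matrix.of fun (i j : Fin n) => if (i : ℕ) + 1 = q + 1 ∧ (j : ℕ) = q + 1 then x else 0)
      * superdiag n q x = 0 := by
    ext i j
    simp only [Matrix.mul_apply, superdiag, Matrix.of_apply, Matrix.zero_apply]
    refine Finset.sum_eq_zero fun l _ => ?_
    split_ifs <;> first | omega | simp
  have h1 : (Matrix.of fun (i j : Fin n) => if (i : ℕ) + 1 = q + 1 ∧ (j : ℕ) = q + 1 then x else 0)
      + superdiag n q x = superdiag n (q + 1) x := by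
    ext i j
    simp only [Matrix.add_apply, superdiag, Matrix.of_apply]
    split_ifs <;> first | omega | simp
  rw [Jmat, add_mul, one_mul, mul_add, mul_one, h0, add_zero, ← h1]
  abel

/-- `𝕁_p = J_p(x) ⋯ J_1(x)` is bidiagonal, because `e_{i+1} e_i = 0`. -/
lemma prod_Jmat (n : ℕ) (x : ℝ) (p : ℕ) :
    ((List.range p).map fun m => Jmat n (p - m) x).prod = 1 + superdiag n p x := by
  induction p with
  | zero =>
    ext i j
    simp [superdiag]
  | succ p ih =>
    rw [List.range_succ_eq_map, List.map_cons, List.prod_cons, List.map_map]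
    have : ((fun m => Jmat n (p + 1 - m) x) ∘ Nat.succ) = fun m => Jmat n (p - m) x := by
      funext m
      simp
    rw [this, ih, Nat.sub_zero, Jmat_mul_superdiag]

/-- The partial product `𝕁_1 ⋯ 𝕁_m`, with 0-based indices. Rows with `i > m` are those of the
identity, in agreement with the truncated subtraction in `(m - i).choose (j - i)`. -/
def partialBinom (n m : ℕ) (x : ℝ) : Matrix (Fin n) (Fin n) ℝ :=
  Matrix.of fun i j => if (i : ℕ) ≤ j then
    x ^ ((j : ℕ) - i) * ((m - i : ℕ).choose ((j : ℕ) - i) : ℝ) else 0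

lemma partialBinom_mul (n m : ℕ) (x : ℝ) :
    partialBinom n m x * (1 + superdiag n (m + 1) x) = partialBinom n (m + 1) x := by
  ext ⟨i, hi⟩ ⟨j, hj⟩
  rw [mul_add, mul_one, Matrix.add_apply, Matrix.mul_apply]
  obtain _ | j := j
  · rw [Finset.sum_eq_zero]
    · simp only [partialBinom, Matrix.of_apply]
      split_ifs with h
      · obtain rfl : i = 0 := by omega
        simp
      · simp
    · intro l _
      simp [superdiag]
  · rw [Finset.sum_eq_single ⟨j, by omega⟩]
    · simp only [partialBinom, superdiag, Matrix.of_apply, true_and]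
      rcases Nat.lt_trichotomy i (j + 1) with h | h | h
      · obtain ⟨d, rfl⟩ : ∃ d, j = i + d := ⟨j - i, by omega⟩
        have e1 : i + d + 1 - i = d + 1 := by omega
        have e2 : i + d - i = d := by omega
        have l1 : i ≤ i + d + 1 := by omega
        have l2 : i ≤ i + d := by omega
        rw [if_pos l1, if_pos l2, if_pos l1, e1, e2]
        by_cases him : i ≤ m
        · have e3 : m + 1 - i = (m - i) + 1 := by omega
          rw [e3, Nat.choose_succ_succ]
          split_ifs with h2
          · push_cast
            ring
          · rw [Nat.choose_eq_zero_of_lt (show m - i < d by omega)]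
            push_cast
            ring
        · have e3 : m + 1 - i = 0 := by omega
          have e4 : m - i = 0 := by omega
          have l3 : ¬ i + d < m + 1 := by omega
          simp only [l3, if_false]
          rw [e3, e4]
          simp
      · subst h
        simp
      · have l1 : ¬ i ≤ j + 1 := by omega
        have l2 : ¬ i ≤ j := by omega
        rw [if_neg l1, if_neg l2, if_neg l1]
        simp
    · intro l _ hl
      have : (l : ℕ) ≠ j := fun h => hl (Fin.ext h)
      simp [superdiag, this]
    · simp

lemma jacobiMat_eq (n : ℕ) (x : ℝ) :
    jacobiMat n (fun _ _ => x) = partialBinom n (n - 1) x := by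
  unfold jacobiMat
  generalize n - 1 = m
  induction m with
  | zero =>
    ext i j
    simp only [List.range_zero, List.map_nil, List.prod_nil, Matrix.one_apply, partialBinom,
      Matrix.of_apply, Nat.zero_sub, Fin.ext_iff]
    rcases Nat.lt_trichotomy i j with h | h | h
    · rw [if_neg (by omega), if_pos (by omega), Nat.choose_eq_zero_of_lt (by omega)]
      simp
    · simp [h]
    · rw [if_neg (by omega), if_neg (by omega)]
  | succ m ih =>
    rw [List.range_succ, List.map_append, List.prod_append, ih, List.map_singleton,
      List.prod_singleton, prod_Jmat, partialBinom_mul]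

/-- The entries in a form without case distinction: for `j < i` the binomial coefficient
vanishes. -/
lemma jacobiMat_apply (n : ℕ) (x : ℝ) (hx : x ≠ 0) (i j : Fin n) :
    jacobiMat n (fun _ _ => x) i j =
      x ^ (j : ℕ) / x ^ (i : ℕ) * ((n - 1 - i : ℕ).choose (n - 1 - j) : ℝ) := by
  rw [jacobiMat_eq, partialBinom, Matrix.of_apply]
  split_ifs with h
  · rw [pow_sub₀ _ hx h, div_eq_mul_inv,
      Nat.choose_symm_of_eq_add (show n - 1 - (i : ℕ) = (j - i) + (n - 1 - j) by omega)]
  · rw [Nat.choose_eq_zero_of_lt (by omega)]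
    simp

/-! ### Flag minors as Vandermonde determinants -/

/-- The difference `j - i` if `i < j`, and `1` otherwise. -/
def upDiff {n : ℕ} (i j : Fin n) : ℝ := if i < j then (j : ℝ) - i else 1

lemma upDiff_ne_zero {n : ℕ} (i j : Fin n) : upDiff i j ≠ 0 := by
  unfold upDiff
  split_ifs with h
  · have : ((i : ℕ) : ℝ) < ((j : ℕ) : ℝ) := by exact_mod_cast h
    exact (sub_pos.2 this).ne'
  · exact one_ne_zero

/-- The Vandermonde product `∏_{i < j in I} (j - i)`. -/
def vand {n : ℕ} (I : Finset (Fin n)) : ℝ := ∏ i ∈ I, ∏ j ∈ I, upDiff i j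

/-- `F I` is the Vandermonde product of `I` up to nonzero constants depending only on `|I|`,
and nonzero weights attached to the elements of `I`. -/
def IsVandermondeLike {n : ℕ} (F : Finset (Fin n) → ℝ) : Prop :=
  ∃ (C : ℕ → ℝ) (g : Fin n → ℝ), (∀ k, C k ≠ 0) ∧ (∀ i, g i ≠ 0) ∧
    ∀ I, F I = C I.card * (∏ i ∈ I, g i) * vand I

lemma prod_orderEmb_s14 {n : ℕ} (I : Finset (Fin n)) (f : Fin n → ℝ) :
    ∏ s, f (I.orderEmbOfFin rfl s) = ∏ i ∈ I, f i := by
  conv_rhs => rw [← Finset.map_orderEmbOfFin_univ I rfl]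
  rw [Finset.prod_map]
  rfl

lemma prod_Ioi_orderEmb {n : ℕ} (I : Finset (Fin n)) :
    ∏ s : Fin I.card, ∏ s' ∈ Finset.Ioi s,
      (((I.orderEmbOfFin rfl s' : ℕ) : ℝ) - ((I.orderEmbOfFin rfl s : ℕ) : ℝ)) = vand I := by
  rw [vand, ← prod_orderEmb_s14 I fun i => ∏ j ∈ I, upDiff i j]
  refine Finset.prod_congr rfl fun s _ => ?_
  rw [← prod_orderEmb_s14 I (upDiff _)]
  have : Finset.Ioi s = Finset.univ.filter (s < ·) := by
    ext
    simp
  rw [this, Finset.prod_filter]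
  refine Finset.prod_congr rfl fun s' _ => ?_
  simp [upDiff]

/-- Falling factorials are monic polynomials, so they may replace the powers in a Vandermonde
determinant. -/
lemma det_descFactorial {k : ℕ} (f g : Fin k → ℝ) (v : Fin k → ℕ) :
    Matrix.det (Matrix.of fun s t : Fin k => f s * (g t * ((v s).descFactorial t : ℝ))) =
      (∏ s, f s) * ((∏ t, g t) * ∏ s, ∏ s' ∈ Finset.Ioi s, ((v s' : ℝ) - v s)) := by
  rw [← Matrix.det_vandermonde,
    Matrix.det_eval_matrixOfPolynomials_eq_det_vandermonde (fun s => (v s : ℝ))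
      (fun t => descPochhammer ℝ t) (fun t => descPochhammer_natDegree ℝ t)
      (fun t => monic_descPochhammer ℝ t),
    ← Matrix.det_mul_row, ← Matrix.det_mul_column]
  simp only [descPochhammer_eval_eq_descFactorial, Matrix.of_apply]

lemma lastCols_card {n k : ℕ} (hk : k ≤ n) : (lastCols n k).card = k := by
  have : lastCols n k = Finset.univ.map
      ((Fin.natAddEmb (n - k)).trans (finCongr (show n - k + k = n by omega)).toEmbedding) := by
    ext j
    simp only [lastCols, Finset.mem_filter, Finset.mem_univ, true_and, Finset.mem_map,
      Function.Embedding.trans_apply, Fin.natAddEmb_apply, Equiv.coe_toEmbedding, finCongr_apply,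
      Fin.ext_iff, Fin.val_cast, Fin.val_natAdd]
    exact ⟨fun h => ⟨⟨j - (n - k), by omega⟩, by simp only; omega⟩, fun ⟨t, ht⟩ => by omega⟩
  rw [this, Finset.card_map, Finset.card_univ, Fintype.card_fin]

lemma firstRows_card {n k : ℕ} (hk : k ≤ n) : (firstRows n k).card = k := by
  have : firstRows n k = Finset.univ.map (Fin.castLEEmb hk) := by
    ext j
    simp only [firstRows, Finset.mem_filter, Finset.mem_univ, true_and, Finset.mem_map,
      Fin.castLEEmb_apply, Fin.ext_iff, Fin.val_castLE]
    exact ⟨fun h => ⟨⟨j, h⟩, rfl⟩, fun ⟨t, ht⟩ => by omega⟩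
  rw [this, Finset.card_map, Finset.card_univ, Fintype.card_fin]

lemma lastCols_orderEmb {n k m : ℕ} (hk : k ≤ n) (h : (lastCols n k).card = m) (t : Fin m) :
    (((lastCols n k).orderEmbOfFin h t : Fin n) : ℕ) = n - k + t := by
  obtain rfl : k = m := by rw [← h, lastCols_card hk]
  rw [← Finset.orderEmbOfFin_unique h (f := fun t => (⟨n - k + t, by omega⟩ : Fin n))]
  · intro t
    simp only [lastCols, Finset.mem_filter, Finset.mem_univ, true_and]
    omega
  · intro s t hst
    simpa using hst

lemma firstRows_orderEmb {n k m : ℕ} (hk : k ≤ n) (h : (firstRows n k).card = m) (t : Fin m) :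
    (((firstRows n k).orderEmbOfFin h t : Fin n) : ℕ) = t := by
  obtain rfl : k = m := by rw [← h, firstRows_card hk]
  rw [← Finset.orderEmbOfFin_unique h (f := Fin.castLE hk)]
  · rfl
  · intro t
    simp [firstRows]
  · exact Fin.strictMono_castLE hk

lemma flagR_vand (n : ℕ) (x : ℝ) (hx : x ≠ 0) :
    IsVandermondeLike (flagR (jacobiMat n fun _ _ => x)) := by
  -- Besides the rescalings, `C k` collects two signs: one from reversing the order of the columns,
  -- one from passing from the nodes `n - 1 - i` to the nodes `i`.
  refine ⟨fun k => (Equiv.Perm.sign (Fin.revPerm : Equiv.Perm (Fin k)) : ℝ) *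
      ((∏ t : Fin k, x ^ (n - 1 - (t : ℕ)) / ((t : ℕ).factorial : ℝ)) *
        ∏ s : Fin k, ∏ s' ∈ Finset.Ioi s, (-1 : ℝ)),
    fun i => (x ^ (i : ℕ))⁻¹, fun k => ?_, fun i => inv_ne_zero (pow_ne_zero _ hx), fun I => ?_⟩
  · refine mul_ne_zero ?_ (mul_ne_zero ?_ ?_)
    · rcases Int.units_eq_one_or (Equiv.Perm.sign (Fin.revPerm : Equiv.Perm (Fin k))) with h | h <;>
        simp [h]
    · exact Finset.prod_ne_zero_iff.2 fun t _ => div_ne_zero (pow_ne_zero _ hx)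
        (Nat.cast_ne_zero.2 (Nat.factorial_ne_zero _))
    · exact Finset.prod_ne_zero_iff.2 fun s _ => Finset.prod_ne_zero_iff.2 fun _ _ => by norm_num
  · have hI : I.card ≤ n := by simpa using Finset.card_le_univ I
    rw [flagR, gminor, dif_pos (lastCols_card hI)]
    have hA := det_descFactorial (fun s => (x ^ (I.orderEmbOfFin rfl s : ℕ))⁻¹)
      (fun t : Fin I.card => x ^ (n - 1 - (t : ℕ)) / ((t : ℕ).factorial : ℝ))
      (fun s => n - 1 - I.orderEmbOfFin rfl s)
    have hV : ∏ s : Fin I.card, ∏ s' ∈ Finset.Ioi s,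
        (((n - 1 - (I.orderEmbOfFin rfl s' : ℕ) : ℕ) : ℝ)
          - ((n - 1 - (I.orderEmbOfFin rfl s : ℕ) : ℕ) : ℝ)) =
        (∏ s : Fin I.card, ∏ s' ∈ Finset.Ioi s, (-1 : ℝ)) * vand I := by
      rw [← prod_Ioi_orderEmb, ← Finset.prod_mul_distrib]
      refine Finset.prod_congr rfl fun s _ => ?_
      rw [← Finset.prod_mul_distrib]
      refine Finset.prod_congr rfl fun s' _ => ?_
      have h1 := (I.orderEmbOfFin rfl s).isLt
      have h2 := (I.orderEmbOfFin rfl s').isLt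
      rw [Nat.cast_sub (show (I.orderEmbOfFin rfl s : ℕ) ≤ n - 1 by omega),
        Nat.cast_sub (show (I.orderEmbOfFin rfl s' : ℕ) ≤ n - 1 by omega)]
      ring
    rw [hV, prod_orderEmb_s14 I fun i => (x ^ (i : ℕ))⁻¹] at hA
    have hperm := Matrix.det_permute' (Fin.revPerm : Equiv.Perm (Fin I.card))
      (Matrix.of fun s t : Fin I.card => (x ^ (I.orderEmbOfFin rfl s : ℕ))⁻¹ *
        (x ^ (n - 1 - (t : ℕ)) / ((t : ℕ).factorial : ℝ) *
          ((n - 1 - I.orderEmbOfFin rfl s : ℕ).descFactorial t : ℝ)))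
    rw [hA] at hperm
    trans
    · refine Eq.trans (congrArg Matrix.det ?_) hperm
      ext s t
      have ht : (Fin.rev t : ℕ) = n - 1 - (n - I.card + t) := by
        rw [Fin.val_rev]
        omega
      have ht' : n - 1 - (n - 1 - (n - I.card + (t : ℕ))) = n - I.card + t := by omega
      simp only [Matrix.of_apply, Matrix.submatrix_apply, id, Fin.revPerm_apply]
      rw [jacobiMat_apply n x hx, lastCols_orderEmb hI, ht, ht',
        Nat.descFactorial_eq_factorial_mul_choose]
      have := Nat.cast_ne_zero (R := ℝ).2 (Nat.factorial_ne_zero (n - 1 - (n - I.card + (t : ℕ))))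
      push_cast
      field_simp
    · ring

lemma flagU_vand (n : ℕ) (x : ℝ) (hx : x ≠ 0) :
    IsVandermondeLike (flagU (jacobiMat n fun _ _ => x)) := by
  have hf : ∀ m : ℕ, ((m.factorial : ℕ) : ℝ) ≠ 0 := fun m =>
    Nat.cast_ne_zero.2 (Nat.factorial_ne_zero m)
  refine ⟨fun k => ∏ t : Fin k, ((n - 1 - (t : ℕ)).factorial : ℝ) / x ^ (t : ℕ),
    fun j => x ^ (j : ℕ) / ((n - 1 - (j : ℕ)).factorial * (j : ℕ).factorial : ℝ),
    fun k => Finset.prod_ne_zero_iff.2 fun t _ => div_ne_zero (hf _) (pow_ne_zero _ hx),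
    fun j => div_ne_zero (pow_ne_zero _ hx) (mul_ne_zero (hf _) (hf _)), fun J => ?_⟩
  have hJ : J.card ≤ n := by simpa using Finset.card_le_univ J
  have hc := firstRows_card hJ
  have hA := det_descFactorial
    (fun s => x ^ (J.orderEmbOfFin rfl s : ℕ) /
      ((n - 1 - (J.orderEmbOfFin rfl s : ℕ)).factorial * (J.orderEmbOfFin rfl s : ℕ).factorial : ℝ))
    (fun t : Fin J.card => ((n - 1 - (t : ℕ)).factorial : ℝ) / x ^ (t : ℕ))
    (fun s => J.orderEmbOfFin rfl s)
  rw [prod_Ioi_orderEmb, prod_orderEmb_s14 J fun j => x ^ (j : ℕ) /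
    ((n - 1 - (j : ℕ)).factorial * (j : ℕ).factorial : ℝ)] at hA
  rw [flagU, gminor, dif_pos hc.symm]
  -- `gminor` indexes the determinant by `Fin` of the number of rows, which equals `J.card`
  -- only propositionally.
  rw [← Matrix.det_submatrix_equiv_self (finCongr hc.symm), ← Matrix.det_transpose]
  trans
  · refine Eq.trans (congrArg Matrix.det ?_) hA
    ext s t
    simp only [Matrix.transpose_apply, Matrix.submatrix_apply, Matrix.of_apply]
    have hrow : (((firstRows n J.card).orderEmbOfFin rfl (finCongr hc.symm t) : Fin n) : ℕ) = t := by
      rw [firstRows_orderEmb hJ]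
      rfl
    have hcol : J.orderEmbOfFin hc.symm (finCongr hc.symm s) = J.orderEmbOfFin rfl s := by
      rw [Finset.orderEmbOfFin_eq_orderEmbOfFin_iff]
      rfl
    rw [jacobiMat_apply n x hx, hrow, hcol]
    generalize J.orderEmbOfFin rfl s = j
    have hj := j.isLt
    have htn : (t : ℕ) < n := by omega
    generalize (t : ℕ) = i at htn
    by_cases hij : i ≤ j
    · have e1 := Nat.choose_mul_factorial_mul_factorial (show n - 1 - (j : ℕ) ≤ n - 1 - i by omega)
      have e2 := Nat.factorial_mul_descFactorial hij
      rw [show n - 1 - i - (n - 1 - (j : ℕ)) = j - i by omega] at e1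
      rw [← e1, ← e2]
      have := hf (n - 1 - j)
      have := hf (j - i)
      have hd : ((Nat.descFactorial j i : ℕ) : ℝ) ≠ 0 := Nat.cast_ne_zero.2 fun h0 => by
        rw [Nat.descFactorial_eq_zero_iff_lt] at h0
        omega
      push_cast
      field_simp
    · rw [Nat.choose_eq_zero_of_lt (by omega), Nat.descFactorial_eq_zero_iff_lt.2 (by omega)]
      simp
  · ring

/-! ### The cross-ratio -/

lemma vand_insert {n : ℕ} {a : Fin n} {K : Finset (Fin n)} (ha : a ∉ K) :
    vand (insert a K) = vand K * ∏ k ∈ K, (upDiff a k * upDiff k a) := by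
  have haa : upDiff a a = 1 := by simp [upDiff]
  simp only [vand, Finset.prod_insert ha, Finset.prod_mul_distrib, haa]
  ring

/-- The weights `g`, the constants `C` and all differences involving `K` cancel in the cross-ratio;
only the differences within `{b, c}` and `{a, b}` survive. -/
lemma IsVandermondeLike.ratio {n : ℕ} {F : Finset (Fin n) → ℝ} (hF : IsVandermondeLike F)
    {K : Finset (Fin n)} {a b c : Fin n} (ha : a ∉ K) (hb : b ∉ K) (hc : c ∉ K)
    (hab : a < b) (hbc : b < c) :
    F (insert a K) * F (insert b (insert c K)) / (F (insert a (insert b K)) * F (insert c K)) =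
      ((c : ℝ) - b) / ((b : ℝ) - a) := by
  obtain ⟨C, g, hC, hg, hF⟩ := hF
  have hac : a ≠ c := (hab.trans hbc).ne
  have hbcK : b ∉ insert c K := by simp [hb, hbc.ne]
  have habK : a ∉ insert b K := by simp [ha, hab.ne]
  have hP : ∀ z : Fin n, ∏ k ∈ K, (upDiff z k * upDiff k z) ≠ 0 := fun z =>
    Finset.prod_ne_zero_iff.2 fun k _ => mul_ne_zero (upDiff_ne_zero _ _) (upDiff_ne_zero _ _)
  have hV : vand K ≠ 0 :=
    Finset.prod_ne_zero_iff.2 fun i _ => Finset.prod_ne_zero_iff.2 fun j _ => upDiff_ne_zero i j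
  have hG : ∏ i ∈ K, g i ≠ 0 := Finset.prod_ne_zero_iff.2 fun i _ => hg i
  have h1 : upDiff b c = (c : ℝ) - b := if_pos hbc
  have h2 : upDiff c b = 1 := if_neg hbc.not_gt
  have h3 : upDiff a b = (b : ℝ) - a := if_pos hab
  have h4 : upDiff b a = 1 := if_neg hab.not_gt
  have h5 : (b : ℝ) - a ≠ 0 := h3 ▸ upDiff_ne_zero a b
  rw [hF, hF, hF, hF, vand_insert hbcK, vand_insert habK, vand_insert ha, vand_insert hb,
    vand_insert hc, Finset.prod_insert hbcK, Finset.prod_insert habK, Finset.prod_insert ha,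
    Finset.prod_insert hb, Finset.prod_insert hc, Finset.prod_insert hb, Finset.prod_insert hc,
    Finset.card_insert_of_notMem hbcK, Finset.card_insert_of_notMem habK,
    Finset.card_insert_of_notMem ha, Finset.card_insert_of_notMem hb,
    Finset.card_insert_of_notMem hc, h1, h2, h3, h4]
  have := hP a
  have := hP b
  have := hP c
  have := hg a
  have := hg b
  have := hg c
  have := hC (K.card + 1)
  have := hC (K.card + 1 + 1)
  field_simp

/-- The cross-ratio for the index sets of `Y_{abc}` and `Y^{abc}`. -/
lemma IsVandermondeLike.ratio_right {n : ℕ} {F : Finset (Fin n) → ℝ} (hF : IsVandermondeLike F)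
    {a b c : ℕ} (ha : 1 ≤ a) (hab : a < b) (hbc : b < c) (hcn : c ≤ n) :
    F (iv n a (b-1) ∪ iv n (c+1) n) * F (iv n (a+1) b ∪ iv n c n) /
      (F (iv n a b ∪ iv n (c+1) n) * F (iv n (a+1) (b-1) ∪ iv n c n)) =
      ((c : ℝ) - b) / ((b : ℝ) - a) := by
  have h := hF.ratio (K := iv n (a+1) (b-1) ∪ iv n (c+1) n) (a := ⟨a - 1, by omega⟩)
    (b := ⟨b - 1, by omega⟩) (c := ⟨c - 1, by omega⟩) (by simp [iv]; omega) (by simp [iv]; omega)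
    (by simp [iv]; omega) (by simp; omega) (by simp; omega)
  have hcast : ((c - 1 : ℕ) - (b - 1 : ℕ) : ℝ) / ((b - 1 : ℕ) - (a - 1 : ℕ)) =
      ((c : ℝ) - b) / ((b : ℝ) - a) := by
    rw [Nat.cast_sub (show 1 ≤ a by omega), Nat.cast_sub (show 1 ≤ b by omega),
      Nat.cast_sub (show 1 ≤ c by omega)]
    ring
  rw [← hcast]
  convert h using 4
  all_goals
    ext i
    simp only [iv, Finset.mem_union, Finset.mem_insert, Finset.mem_filter, Finset.mem_univ,
      true_and, Fin.ext_iff]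
    omega

/-- The cross-ratio for the index sets of `Ỹ_{abc}` and `Ỹ^{abc}`. -/
lemma IsVandermondeLike.ratio_left {n : ℕ} {F : Finset (Fin n) → ℝ} (hF : IsVandermondeLike F)
    {a b c : ℕ} (ha : 1 ≤ a) (hab : a < b) (hbc : b < c) (hcn : c ≤ n) :
    F (iv n 1 a ∪ iv n (b+1) (c-1)) * F (iv n 1 (a-1) ∪ iv n b c) /
      (F (iv n 1 a ∪ iv n b (c-1)) * F (iv n 1 (a-1) ∪ iv n (b+1) c)) =
      ((c : ℝ) - b) / ((b : ℝ) - a) := by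
  have h := hF.ratio (K := iv n 1 (a-1) ∪ iv n (b+1) (c-1)) (a := ⟨a - 1, by omega⟩)
    (b := ⟨b - 1, by omega⟩) (c := ⟨c - 1, by omega⟩) (by simp [iv]; omega) (by simp [iv]; omega)
    (by simp [iv]; omega) (by simp; omega) (by simp; omega)
  have hcast : ((c - 1 : ℕ) - (b - 1 : ℕ) : ℝ) / ((b - 1 : ℕ) - (a - 1 : ℕ)) =
      ((c : ℝ) - b) / ((b : ℝ) - a) := by
    rw [Nat.cast_sub (show 1 ≤ a by omega), Nat.cast_sub (show 1 ≤ b by omega),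
      Nat.cast_sub (show 1 ≤ c by omega)]
    ring
  rw [← hcast]
  convert h using 4
  all_goals
    ext i
    simp only [iv, Finset.mem_union, Finset.mem_insert, Finset.mem_filter, Finset.mem_univ,
      true_and, Fin.ext_iff]
    omega

/-- Lemma 8 (`M0`): for the matrix `M_x` all of whose Jacobi coordinates equal `x > 0`,
the Y-variables are independent of `x` and given by (3.17). -/
theorem stmt_14 (n : ℕ) (hn : 2 ≤ n) (x : ℝ) (hx : 0 < x)
    (a b c : ℕ) (ha : 1 ≤ a) (hab : a < b) (hbc : b < c) (hcn : c ≤ n) :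
    Yr n (jacobiMat n fun _ _ => x) a b c = ((c : ℝ) - b) / ((b : ℝ) - a) ∧
    Ytr n (jacobiMat n fun _ _ => x) a b c = ((c : ℝ) - b) / ((b : ℝ) - a) ∧
    Yu n (jacobiMat n fun _ _ => x) a b c = ((b : ℝ) - a) / ((c : ℝ) - b) ∧
    Ytu n (jacobiMat n fun _ _ => x) a b c = ((b : ℝ) - a) / ((c : ℝ) - b) := by
  have hR := flagR_vand n x hx.ne'
  have hU := flagU_vand n x hx.ne'
  refine ⟨hR.ratio_right ha hab hbc hcn, hR.ratio_left ha hab hbc hcn, ?_, ?_⟩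
  -- The upper Y-variables are the inverse cross-ratios.
  · rw [Yu, ← inv_div, hU.ratio_right ha hab hbc hcn, inv_div]
  · rw [Ytu, ← inv_div, hU.ratio_left ha hab hbc hcn, inv_div]

end
end
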